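/- arXiv:1410.3027 — 4 statements merged into one kernel-verified Lean document; each statement's English description precedes it below -/
import Mathlib

section
/- Let D be a countable linear order with a least element ⊥ and a greatest element ⊤ with ⊥ ≠ ⊤, let d_1 < d_2 < … < d_n be elements of D with ⊥ < d_1 and d_n < ⊤, and let r_1 < r_2 < … < r_n be real numbers with 0 < r_1 and r_n < 1. Then there exists a strictly monotone map g : D → [0,1] such that g(⊥) = 0, g(⊤) = 1, g(d_i) = r_i for each 1 ≤ i ≤ n, and g preserves all existing suprema and infima: for every subset S ⊆ D and every s ∈ D, if s is the least upper bound of S in D then g(s) is the least upper bound of g(S) in [0,1], and if s is the greatest lower bound of S in D then g(s) is the greatest lower bound of g(S) in [0,1]. -/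
open Set unitInterval

/-!
Mathlib's `Order.Fill D` is a countable dense order in which `D` sits continuously; adding a copy of
`ℚ` at each end removes the endpoints without disturbing continuity. Cantor's back-and-forth
argument, started from a finite partial isomorphism instead of the empty one, identifies the
resulting order with a countable dense subset of the target that contains the prescribed values. A
strictly monotone map with dense range is continuous, so the composite embedding of `D` is
continuous, and a continuous monotone map preserves suprema and infima of nonempty sets.
Treating `⊥ ↦ 0` and `⊤ ↦ 1` as two further prescribed values puts the range in `[0,1]` and takes
care of the empty set.
-/

section BackAndForth

open Order

variable {α β ι : Type*} [LinearOrder α] [LinearOrder β]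

theorem cmp_eq_cmp_of_mem_ideal {J : Ideal (PartialIso α β)} {f g : PartialIso α β}
    (hf : f ∈ J) (hg : g ∈ J) {x y : α × β} (hx : x ∈ f.val) (hy : y ∈ g.val) :
    cmp x.1 y.1 = cmp x.2 y.2 := by
  obtain ⟨h, -, hfh, hgh⟩ := J.directed f hf g hg
  exact h.prop x (hfh hx) y (hgh hy)

variable [Countable α] [DenselyOrdered α] [NoMinOrder α] [NoMaxOrder α] [Nonempty α]
  [Countable β] [DenselyOrdered β] [NoMinOrder β] [NoMaxOrder β] [Nonempty β]

theorem exists_orderIso_extending_partialIso (p : PartialIso α β) :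
    ∃ e : α ≃o β, ∀ x ∈ p.val, e x.1 = x.2 := by
  have := Encodable.ofCountable α
  have := Encodable.ofCountable β
  let requirement : α ⊕ β → Cofinal (PartialIso α β) :=
    Sum.elim (PartialIso.definedAtLeft β) (PartialIso.definedAtRight α)
  let J := idealOfCofinals p requirement
  have total (a : α) : ∃ b, ∃ f ∈ J, (a, b) ∈ f.val := by
    obtain ⟨f, ⟨b, hab⟩, hf⟩ := cofinal_meets_idealOfCofinals p requirement (.inl a)
    exact ⟨b, f, hf, hab⟩
  have surjective (b : β) : ∃ a, ∃ f ∈ J, (a, b) ∈ f.val := by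
    obtain ⟨f, ⟨a, hab⟩, hf⟩ := cofinal_meets_idealOfCofinals p requirement (.inr b)
    exact ⟨a, f, hf, hab⟩
  choose toFun f hf hf_mem using total
  choose invFun g hg hg_mem using surjective
  refine ⟨.ofCmpEqCmp toFun invFun fun a b ↦
    cmp_eq_cmp_of_mem_ideal (hf a) (hg b) (hf_mem a) (hg_mem b), fun x hx ↦ ?_⟩
  have hcmp := cmp_eq_cmp_of_mem_ideal (hf x.1) (mem_idealOfCofinals p requirement) (hf_mem x.1) hx
  exact (eq_iff_eq_of_cmp_eq_cmp hcmp).1 rfl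

theorem exists_orderIso_apply_eq [LinearOrder ι] [Finite ι] {u : ι → α} {v : ι → β}
    (hu : StrictMono u) (hv : StrictMono v) : ∃ e : α ≃o β, ∀ i, e (u i) = v i := by
  classical
  have := Fintype.ofFinite ι
  let p : PartialIso α β := ⟨Finset.univ.image fun i ↦ (u i, v i), by
    simp only [Finset.forall_mem_image, hu.cmp_map_eq, hv.cmp_map_eq, implies_true]⟩
  obtain ⟨e, he⟩ := exists_orderIso_extending_partialIso p
  exact ⟨e, fun i ↦ he _ (Finset.mem_image_of_mem _ (Finset.mem_univ i))⟩

end BackAndForth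

section DenseSubset

variable {X : Type*} [LinearOrder X] [TopologicalSpace X] {s : Set X}

theorem noMaxOrder_of_dense [ClosedIicTopology X] [NoMaxOrder X] (hs : Dense s) : NoMaxOrder s :=
  ⟨fun x ↦ let ⟨y, hy, hxy⟩ := hs.exists_gt x; ⟨⟨y, hy⟩, hxy⟩⟩

theorem noMinOrder_of_dense [ClosedIciTopology X] [NoMinOrder X] (hs : Dense s) : NoMinOrder s :=
  ⟨fun x ↦ let ⟨y, hy, hyx⟩ := hs.exists_lt x; ⟨⟨y, hy⟩, hyx⟩⟩

theorem denselyOrdered_of_dense [OrderClosedTopology X] [DenselyOrdered X] (hs : Dense s) :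
    DenselyOrdered s :=
  ⟨fun _ _ hxy ↦ let ⟨z, hz, hxz, hzy⟩ := hs.exists_between hxy; ⟨⟨z, hz⟩, hxz, hzy⟩⟩

end DenseSubset

section ContinuousEmbedding

theorem ordConnected_range_inrₗ_inlₗ {α β γ : Type*} [Preorder α] [Preorder β] [Preorder γ] :
    (range fun b : β ↦ (Sum.inrₗ (Sum.inlₗ b) : α ⊕ₗ (β ⊕ₗ γ))).OrdConnected := by
  refine ⟨?_⟩
  rintro _ ⟨b, rfl⟩ _ ⟨b', rfl⟩ (a | m | c) ⟨hb, hb'⟩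
  · exact absurd hb Sum.Lex.not_inr_le_inl
  · exact ⟨m, rfl⟩
  · exact absurd (Sum.Lex.inr_le_inr_iff.1 hb') Sum.Lex.not_inr_le_inl

universe u

theorem exists_continuous_orderEmbedding_countable_dense (D : Type u) [LinearOrder D] [Countable D]
    [TopologicalSpace D] [OrderTopology D] :
    ∃ (E : Type u) (_ : LinearOrder E) (_ : TopologicalSpace E) (_ : OrderTopology E)
      (_ : Countable E) (_ : DenselyOrdered E) (_ : NoMinOrder E) (_ : NoMaxOrder E)
      (_ : Nonempty E) (j : D ↪o E), Continuous j := by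
  let E := ℚ ⊕ₗ (Order.Fill D ⊕ₗ ℚ)
  let _ : TopologicalSpace E := Preorder.topology E
  have : OrderTopology E := ⟨rfl⟩
  have : Countable (D ×ₗ ℚ) := inferInstanceAs (Countable (D × ℚ))
  have : Countable E := inferInstanceAs (Countable (ℚ ⊕ (Order.Fill D ⊕ ℚ)))
  let middle : Order.Fill D ↪o E := .ofStrictMono (fun x ↦ Sum.inrₗ (Sum.inlₗ x))
    (Sum.Lex.inr_strictMono.comp Sum.Lex.inl_strictMono)
  have continuous_middle : Continuous middle :=
    (middle.strictMono.isEmbedding_of_ordConnected ordConnected_range_inrₗ_inlₗ).continuous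
  exact ⟨E, inferInstance, inferInstance, inferInstance, inferInstance, inferInstance,
    inferInstance, inferInstance, inferInstance, Order.Fill.some.trans middle,
    continuous_middle.comp Order.Fill.continuous_some⟩

variable {D E X ι : Type*} [LinearOrder ι] [Finite ι]
  [LinearOrder X] [TopologicalSpace X] [OrderTopology X] [TopologicalSpace.SeparableSpace X]
  [DenselyOrdered X] [NoMinOrder X] [NoMaxOrder X] [Nonempty X]

theorem exists_strictMono_denseRange [LinearOrder E] [Countable E] [DenselyOrdered E]
    [NoMinOrder E] [NoMaxOrder E] [Nonempty E] {u : ι → E} {v : ι → X}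
    (hu : StrictMono u) (hv : StrictMono v) :
    ∃ f : E → X, StrictMono f ∧ DenseRange f ∧ ∀ i, f (u i) = v i := by
  obtain ⟨s, hs_countable, hs⟩ := TopologicalSpace.exists_countable_dense X
  have hT : Dense (s ∪ range v) := hs.mono subset_union_left
  have := (hs_countable.union (countable_range v)).to_subtype
  have := hT.nonempty.to_subtype
  have := denselyOrdered_of_dense hT
  have := noMinOrder_of_dense hT
  have := noMaxOrder_of_dense hT
  obtain ⟨e, he⟩ := exists_orderIso_apply_eq hu
    (v := fun i ↦ (⟨v i, .inr ⟨i, rfl⟩⟩ : ↥(s ∪ range v))) fun _ _ hij ↦ hv hij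
  exact ⟨fun x ↦ e x, fun _ _ hxy ↦ e.strictMono hxy,
    hT.denseRange_val.comp e.surjective.denseRange continuous_subtype_val,
    fun i ↦ congrArg Subtype.val (he i)⟩

theorem exists_strictMono_continuous [LinearOrder D] [Countable D] [TopologicalSpace D]
    [OrderTopology D] {u : ι → D} {v : ι → X} (hu : StrictMono u) (hv : StrictMono v) :
    ∃ g : D → X, StrictMono g ∧ Continuous g ∧ ∀ i, g (u i) = v i := by
  obtain ⟨E, _, _, _, _, _, _, _, _, j, hj⟩ := exists_continuous_orderEmbedding_countable_dense D
  obtain ⟨f, hf, hf_dense, hfv⟩ := exists_strictMono_denseRange (j.strictMono.comp hu) hv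
  exact ⟨f ∘ j, hf.comp j.strictMono, (hf.monotone.continuous_of_denseRange hf_dense).comp hj, hfv⟩

end ContinuousEmbedding

section Bounds

variable {α β : Type*} [LinearOrder α] [TopologicalSpace α] [OrderTopology α]
  [Preorder β] [TopologicalSpace β] [OrderClosedTopology β] {f : α → β} {S : Set α} {s : α}

theorem isLUB_image_of_monotone_of_continuous [OrderBot α] (hf : Monotone f) (hc : Continuous f)
    (hbot : IsBot (f ⊥)) (h : IsLUB S s) : IsLUB (f '' S) (f s) := by
  rcases S.eq_empty_or_nonempty with rfl | hS
  · obtain rfl : s = ⊥ := (isLUB_empty_iff.1 h).eq_bot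
    simpa only [image_empty, isLUB_empty_iff] using hbot
  · exact h.isLUB_of_tendsto (hf.monotoneOn S) hS hc.continuousWithinAt

theorem isGLB_image_of_monotone_of_continuous [OrderTop α] (hf : Monotone f) (hc : Continuous f)
    (htop : IsTop (f ⊤)) (h : IsGLB S s) : IsGLB (f '' S) (f s) :=
  isLUB_image_of_monotone_of_continuous (α := αᵒᵈ) (β := βᵒᵈ) hf.dual hc htop h

end Bounds

section Endpoints

variable {α ι : Type*}

/-- The family `u` with a new least index, sent to `a`, and a new greatest index, sent to `b`; it
turns the requirement that a map send `⊥` to `a` and `⊤` to `b` into two more prescribed values. -/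
def withEndpoints (a b : α) (u : ι → α) : WithBot (WithTop ι) → α :=
  WithBot.recBotCoe a (WithTop.recTopCoe b u)

theorem strictMono_withEndpoints [Preorder α] [Preorder ι] {a b : α} {u : ι → α} (hab : a < b)
    (hu : StrictMono u) (ha : ∀ i, a < u i) (hb : ∀ i, u i < b) :
    StrictMono (withEndpoints a b u) :=
  WithBot.strictMono_iff.2 ⟨WithTop.strictMono_iff.2 ⟨hu, hb⟩, WithTop.forall.2 ⟨hab, ha⟩⟩

end Endpoints

theorem embed_countable_order_finite_general {D X ι : Type*} [LinearOrder D] [Countable D]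
    [OrderBot D] [OrderTop D] [LinearOrder X] [TopologicalSpace X] [OrderTopology X]
    [TopologicalSpace.SeparableSpace X] [DenselyOrdered X] [NoMinOrder X] [NoMaxOrder X]
    [LinearOrder ι] [Finite ι] (hD : (⊥ : D) ≠ ⊤) {a b : X} (hab : a < b)
    {u : ι → D} {v : ι → X} (hu : StrictMono u) (hub : ∀ i, ⊥ < u i) (hut : ∀ i, u i < ⊤)
    (hv : StrictMono v) (hva : ∀ i, a < v i) (hvb : ∀ i, v i < b) :
    ∃ g : D → Icc a b, StrictMono g ∧ (g ⊥ : X) = a ∧ (g ⊤ : X) = b ∧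
      (∀ i, (g (u i) : X) = v i) ∧
      (∀ (S : Set D) (s : D), IsLUB S s → IsLUB (g '' S) (g s)) ∧
      (∀ (S : Set D) (s : D), IsGLB S s → IsGLB (g '' S) (g s)) := by
  let _ : TopologicalSpace D := Preorder.topology D
  have : OrderTopology D := ⟨rfl⟩
  have : Nonempty X := ⟨a⟩
  obtain ⟨g, hg, hg_cont, hgv⟩ := exists_strictMono_continuous
    (strictMono_withEndpoints hD.lt_top hu hub hut)
    (strictMono_withEndpoints hab hv hva hvb)
  have hg_bot : g ⊥ = a := hgv ⊥
  have hg_top : g ⊤ = b := hgv (⊤ : WithTop ι)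
  have hg_mem (x : D) : g x ∈ Icc a b :=
    ⟨hg_bot ▸ hg.monotone bot_le, hg_top ▸ hg.monotone le_top⟩
  let g' : D → Icc a b := fun x ↦ ⟨g x, hg_mem x⟩
  have hg' : StrictMono g' := fun _ _ hxy ↦ hg hxy
  have hg'_cont : Continuous g' := hg_cont.subtype_mk hg_mem
  have hg'_bot : IsBot (g' ⊥) := fun y ↦ hg_bot.trans_le y.2.1
  have hg'_top : IsTop (g' ⊤) := fun y ↦ y.2.2.trans_eq hg_top.symm
  exact ⟨g', hg', hg_bot, hg_top, fun i ↦ hgv (i : WithTop ι),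
    fun _ _ ↦ isLUB_image_of_monotone_of_continuous hg'.monotone hg'_cont hg'_bot,
    fun _ _ ↦ isGLB_image_of_monotone_of_continuous hg'.monotone hg'_cont hg'_top⟩

/-- Embedding of a countable linear order with endpoints (and finitely many
prescribed intermediate values) into `[0,1]`, preserving all existing suprema
and infima. -/
theorem embed_countable_order_finite {D : Type*} [LinearOrder D] [Countable D]
    [OrderBot D] [OrderTop D] (hD : (⊥ : D) ≠ ⊤)
    {n : ℕ} (d : Fin n → D) (r : Fin n → ℝ)
    (hd : StrictMono d) (hdb : ∀ i, ⊥ < d i) (hdt : ∀ i, d i < ⊤)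
    (hr : StrictMono r) (hr0 : ∀ i, 0 < r i) (hr1 : ∀ i, r i < 1) :
    ∃ g : D → unitInterval, StrictMono g ∧ g ⊥ = 0 ∧ g ⊤ = 1 ∧
      (∀ i, (g (d i) : ℝ) = r i) ∧
      (∀ (S : Set D) (s : D), IsLUB S s → IsLUB (g '' S) (g s)) ∧
      (∀ (S : Set D) (s : D), IsGLB S s → IsGLB (g '' S) (g s)) := by
  obtain ⟨g, hg, hg_bot, hg_top, hg_bounds⟩ :=
    embed_countable_order_finite_general hD one_pos hd hdb hdt hr hr0 hr1
  exact ⟨g, hg, Subtype.ext hg_bot, Subtype.ext hg_top, hg_bounds⟩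
end

section
/- Let D be a countable linear order with a least element ⊥ and a greatest element ⊤ with ⊥ ≠ ⊤, let a : ℕ → D be a strictly decreasing sequence with a(0) < ⊤ and such that ⊥ is the greatest lower bound of the set {a(n) : n ∈ ℕ} in D, and let r : ℕ → ℝ be a strictly decreasing sequence with 0 < r(n) < 1 for all n and lim_{n→∞} r(n) = 0. Then there exists a strictly monotone map g : D → [0,1] such that g(⊥) = 0, g(⊤) = 1, g(a(n)) = r(n) for every n ∈ ℕ, and g preserves all existing suprema and infima: for every subset S ⊆ D and every s ∈ D, if s is the least upper bound of S in D then g(s) is the least upper bound of g(S) in [0,1], and if s is the greatest lower bound of S in D then g(s) is the greatest lower bound of g(S) in [0,1]. -/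
open Set unitInterval Filter

/-!
Inserting a copy of a rational ray into every gap of a countable linear order, and beyond its
extremal elements, gives a countable dense order without endpoints, that is, a copy of `ℚ`. Only
the sides on which a point is not a limit receive new points, so the inclusion into `ℚ`, and hence
into `ℝ`, preserves suprema and infima of nonempty sets. A piecewise affine, continuous and
monotone change of variable on `ℝ` then moves the images of the given sequence, which converge to
the image of its infimum, to the prescribed values.
-/

section OrdContinuous

variable {α β : Type*} [Preorder α] [Preorder β] {f : α → β} {s : Set α} {a : α}

lemma isLUB_image_of_leftOrdContinuous (hf : LeftOrdContinuous f)
    (hbot : ∀ x, IsBot x → IsBot (f x)) (ha : IsLUB s a) : IsLUB (f '' s) (f a) := by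
  rcases s.eq_empty_or_nonempty with rfl | hs
  · rw [image_empty, isLUB_empty_iff]
    exact hbot a (isLUB_empty_iff.1 ha)
  · exact hf hs ha

lemma isGLB_image_of_rightOrdContinuous (hf : RightOrdContinuous f)
    (htop : ∀ x, IsTop x → IsTop (f x)) (ha : IsGLB s a) : IsGLB (f '' s) (f a) :=
  isLUB_image_of_leftOrdContinuous (α := αᵒᵈ) (β := βᵒᵈ) hf htop ha

lemma exists_unitInterval_lift {D : Type*} [PartialOrder D] [OrderBot D] [OrderTop D] {f : D → ℝ}
    (hleft : LeftOrdContinuous f) (hright : RightOrdContinuous f) (hbot : f ⊥ = 0)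
    (htop : f ⊤ = 1) :
    ∃ g : D → I, (∀ d, (g d : ℝ) = f d) ∧
      (∀ (S : Set D) (s : D), IsLUB S s → IsLUB (g '' S) (g s)) ∧
      (∀ (S : Set D) (s : D), IsGLB S s → IsGLB (g '' S) (g s)) := by
  let g : D → I := projIcc 0 1 zero_le_one ∘ f
  have hmem (d : D) : f d ∈ I := ⟨hbot ▸ hleft.mono bot_le, htop ▸ hleft.mono le_top⟩
  have hgf (d : D) : (g d : ℝ) = f d := congrArg Subtype.val (projIcc_of_mem _ (hmem d))
  have hgbot : g ⊥ = 0 := Subtype.ext ((hgf ⊥).trans hbot)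
  have hgtop : g ⊤ = 1 := Subtype.ext ((hgf ⊤).trans htop)
  have hproj : Monotone (projIcc (0 : ℝ) 1 zero_le_one) := monotone_projIcc _
  have hgleft : LeftOrdContinuous g := (continuous_projIcc.leftOrdContinuous hproj).comp hleft
  have hgright : RightOrdContinuous g := (continuous_projIcc.rightOrdContinuous hproj).comp hright
  refine ⟨g, hgf, fun _ _ => isLUB_image_of_leftOrdContinuous hgleft fun x hx y => ?_,
    fun _ _ => isGLB_image_of_rightOrdContinuous hgright fun x hx y => ?_⟩
  · rw [hx.eq_bot, hgbot]
    exact unitInterval.nonneg'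
  · rw [hx.eq_top, hgtop]
    exact unitInterval.le_one'

end OrdContinuous

section GapFilling

open Order

variable {D : Type*} [LinearOrder D]

/-- The rationals placed at the point `d` when the gaps of `D` are filled: `0` stands for `d`
itself, and the positive (negative) rationals are present when `d` is not a limit from above
(below). Extremal elements of `D` count as non-limits on their outer side. -/
def gapFiber (d : D) : Set ℚ :=
  {q | (0 < q → ¬ IsPredLimit d) ∧ (q < 0 → ¬ IsSuccLimit d)}

lemma zero_mem_gapFiber (d : D) : (0 : ℚ) ∈ gapFiber d :=
  ⟨fun h => absurd h (lt_irrefl 0), fun h => absurd h (lt_irrefl 0)⟩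

instance ordConnected_gapFiber (d : D) : (gapFiber d).OrdConnected where
  out' _ hp _ hq _ ht :=
    ⟨fun h => hq.1 (h.trans_le ht.2), fun h => hp.2 (ht.1.trans_lt h)⟩

lemma exists_gt_of_not_isPredLimit {d : D} (hd : ¬ IsPredLimit d) (q : gapFiber d) :
    ∃ q' : gapFiber d, q < q' :=
  ⟨⟨q + 1, fun _ => hd, fun h => q.2.2 ((lt_add_one _).trans h)⟩,
    Subtype.coe_lt_coe.1 (lt_add_one _)⟩

lemma exists_lt_of_not_isSuccLimit {d : D} (hd : ¬ IsSuccLimit d) (q : gapFiber d) :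
    ∃ q' : gapFiber d, q' < q :=
  ⟨⟨q - 1, fun h => q.2.1 (h.trans (sub_one_lt _)), fun _ => hd⟩,
    Subtype.coe_lt_coe.1 (sub_one_lt _)⟩

variable (D) in
/-- The order obtained from `D` by inserting rational rays into its gaps and beyond its extremal
elements: the lexicographic sum of the fibers `gapFiber d`. -/
abbrev GapFilling : Type _ := Σₗ d : D, gapFiber d

namespace GapFilling

/-- The inclusion of `D` into its gap filling, placing `d` at the zero of its fiber. -/
def of (d : D) : GapFilling D := ⟨d, 0, zero_mem_gapFiber d⟩

lemma of_strictMono : StrictMono (of : D → GapFilling D) :=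
  fun _ _ h => Sigma.Lex.left _ _ h

instance [Countable D] : Countable (GapFilling D) :=
  inferInstanceAs (Countable (Σ d : D, gapFiber d))

instance : NoMaxOrder (GapFilling D) where
  exists_gt := by
    rintro ⟨d, q⟩
    by_cases hd : IsMax d
    · obtain ⟨q', hq⟩ := exists_gt_of_not_isPredLimit hd.not_isPredLimit q
      exact ⟨⟨d, q'⟩, Sigma.Lex.right _ _ hq⟩
    · obtain ⟨e, hde⟩ := not_isMax_iff.1 hd
      exact ⟨of e, Sigma.Lex.left _ _ hde⟩

instance : NoMinOrder (GapFilling D) where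
  exists_lt := by
    rintro ⟨d, q⟩
    by_cases hd : IsMin d
    · obtain ⟨q', hq⟩ := exists_lt_of_not_isSuccLimit hd.not_isSuccLimit q
      exact ⟨⟨d, q'⟩, Sigma.Lex.right _ _ hq⟩
    · obtain ⟨e, hed⟩ := not_isMin_iff.1 hd
      exact ⟨of e, Sigma.Lex.left _ _ hed⟩

instance : DenselyOrdered (GapFilling D) where
  dense := by
    rintro ⟨d, p⟩ ⟨e, q⟩ (⟨_, _, hde⟩ | ⟨_, _, hpq⟩)
    · by_cases hcov : d ⋖ e
      · obtain ⟨p', hp⟩ :=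
          exists_gt_of_not_isPredLimit (fun hd => hd.isPredPrelimit e hcov) p
        exact ⟨⟨d, p'⟩, Sigma.Lex.right _ _ hp, Sigma.Lex.left _ _ hde⟩
      · obtain ⟨m, hdm, hme⟩ := exists_lt_lt_of_not_covBy hde hcov
        exact ⟨of m, Sigma.Lex.left _ _ hdm, Sigma.Lex.left _ _ hme⟩
    · obtain ⟨t, hpt, htq⟩ := exists_between hpq
      exact ⟨⟨d, t⟩, Sigma.Lex.right _ _ hpt, Sigma.Lex.right _ _ htq⟩

lemma fst_monotone : Monotone (fun p : GapFilling D => p.1) := by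
  rintro _ _ (⟨_, _, h⟩ | _)
  exacts [h.le, le_rfl]

lemma of_leftOrdContinuous : LeftOrdContinuous (of : D → GapFilling D) := by
  intro S s hS hs
  refine ⟨of_strictMono.monotone.mem_upperBounds_image hs.1, ?_⟩
  rintro ⟨d, q⟩ hub
  by_cases hsS : s ∈ S
  · exact hub (mem_image_of_mem of hsS)
  have hsd : s ≤ d := hs.2 fun x hx => fst_monotone (hub (mem_image_of_mem of hx))
  rcases hsd.lt_or_eq with hsd | rfl
  · exact Sigma.Lex.left _ _ hsd
  · have hq : (0 : ℚ) ≤ q := not_lt.1 fun h => q.2.2 h (hs.isSuccLimit_of_notMem hS hsS)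
    exact Sigma.Lex.right _ _ hq

lemma of_rightOrdContinuous : RightOrdContinuous (of : D → GapFilling D) := by
  intro S s hS hs
  refine ⟨of_strictMono.monotone.mem_lowerBounds_image hs.1, ?_⟩
  rintro ⟨d, q⟩ hlb
  by_cases hsS : s ∈ S
  · exact hlb (mem_image_of_mem of hsS)
  have hds : d ≤ s := hs.2 fun x hx => fst_monotone (hlb (mem_image_of_mem of hx))
  rcases hds.lt_or_eq with hds | rfl
  · exact Sigma.Lex.left _ _ hds
  · have hq : (q : ℚ) ≤ 0 := not_lt.1 fun h => q.2.1 h (hs.isPredLimit_of_notMem hS hsS)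
    exact Sigma.Lex.right _ _ hq

end GapFilling

theorem exists_strictMono_ordContinuous_real [Countable D] :
    ∃ f : D → ℝ, StrictMono f ∧ LeftOrdContinuous f ∧ RightOrdContinuous f := by
  cases isEmpty_or_nonempty D
  · exact ⟨isEmptyElim, fun x => isEmptyElim x, fun _ x => isEmptyElim x, fun _ x => isEmptyElim x⟩
  have : Nonempty (GapFilling D) := .map GapFilling.of ‹_›
  obtain ⟨e⟩ := Order.iso_of_countable_dense (GapFilling D) ℚ
  have hcast : Monotone ((↑) : ℚ → ℝ) := Rat.cast_mono
  exact ⟨(↑) ∘ e ∘ GapFilling.of,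
    Rat.cast_strictMono.comp (e.strictMono.comp GapFilling.of_strictMono),
    (Rat.continuous_coe_real.leftOrdContinuous hcast).comp
      (e.leftOrdContinuous.comp GapFilling.of_leftOrdContinuous),
    (Rat.continuous_coe_real.rightOrdContinuous hcast).comp
      (e.rightOrdContinuous.comp GapFilling.of_rightOrdContinuous)⟩

end GapFilling

section Sequences

lemma exists_mem_Ioc_succ_of_tendsto {α : Type*} [LinearOrder α] [TopologicalSpace α]
    [ClosedIciTopology α] {b : ℕ → α} {l y : α} (hb : Tendsto b atTop (nhds l))
    (hly : l < y) (hy : y ≤ b 0) : ∃ n, y ∈ Ioc (b (n + 1)) (b n) := by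
  by_contra! hstep
  have hle (n : ℕ) : y ≤ b n := by
    induction n with
    | zero => exact hy
    | succ n ih => exact not_lt.1 fun hlt => hstep n ⟨hlt, ih⟩
  obtain ⟨n, hn⟩ := (hb.eventually_lt_const hly).exists
  exact (hle n).not_gt hn

lemma hasSum_sub_succ_of_antitone {r : ℕ → ℝ} {c : ℝ} (hr : Antitone r)
    (hrc : Tendsto r atTop (nhds c)) : HasSum (fun n => r n - r (n + 1)) (r 0 - c) := by
  rw [hasSum_iff_tendsto_nat_of_nonneg fun n => sub_nonneg.2 (hr n.le_succ)]
  simp only [Finset.sum_range_sub']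
  exact hrc.const_sub (r 0)

lemma strictAnti_natCases {α : Type*} [Preorder α] {x : α} {a : ℕ → α} (hx : a 0 < x)
    (ha : StrictAnti a) : StrictAnti (fun n => Nat.casesOn n x a : ℕ → α) := by
  refine strictAnti_nat_of_succ_lt ?_
  rintro (_ | n)
  exacts [hx, ha n.lt_succ_self]

end Sequences

section Ramp

/-- The piecewise affine function that is `0` up to `u`, `1` from `v` on, and affine in between,
for `u < v`. -/
noncomputable def ramp (u v x : ℝ) : ℝ := projIcc 0 1 zero_le_one ((x - u) / (v - u))

variable {u v x y : ℝ}

lemma ramp_nonneg (u v x : ℝ) : 0 ≤ ramp u v x := (projIcc 0 1 zero_le_one _).2.1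

lemma ramp_le_one (u v x : ℝ) : ramp u v x ≤ 1 := (projIcc 0 1 zero_le_one _).2.2

lemma continuous_ramp (u v : ℝ) : Continuous (ramp u v) := by
  unfold ramp
  fun_prop

lemma ramp_monotone (huv : u ≤ v) : Monotone (ramp u v) := fun _ _ hxy =>
  monotone_projIcc _ (div_le_div_of_nonneg_right (sub_le_sub_right hxy u) (sub_nonneg.2 huv))

lemma ramp_of_le_left (huv : u ≤ v) (hx : x ≤ u) : ramp u v x = 0 :=
  congrArg Subtype.val <| projIcc_of_le_left _ <|
    div_nonpos_of_nonpos_of_nonneg (sub_nonpos.2 hx) (sub_nonneg.2 huv)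

lemma ramp_of_right_le (huv : u < v) (hx : v ≤ x) : ramp u v x = 1 :=
  congrArg Subtype.val <| projIcc_of_right_le _ <|
    (one_le_div (sub_pos.2 huv)).2 (sub_le_sub_right hx u)

lemma ramp_lt_ramp (hxy : x < y) (hy : y ∈ Ioc u v) : ramp u v x < ramp u v y := by
  have hvu : 0 < v - u := sub_pos.2 (hy.1.trans_le hy.2)
  have hquot : (x - u) / (v - u) < (y - u) / (v - u) := by gcongr
  have hpos : 0 < (y - u) / (v - u) := div_pos (sub_pos.2 hy.1) hvu
  have hle : (y - u) / (v - u) ≤ 1 := (div_le_one hvu).2 (sub_le_sub_right hy.2 u)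
  simp only [ramp, coe_projIcc, min_eq_right hle, min_eq_right (hquot.le.trans hle),
    max_eq_right hpos.le]
  exact max_lt hpos hquot

end Ramp

section SeqInterpolation

/-- The function equal to `c` up to the limit of the decreasing sequence `b`, equal to `r n` at
`b n` (for `r` decreasing to `c`), affine between consecutive terms of `b` and constant beyond
`b 0`. It is written as a series of ramps so that continuity and monotonicity are inherited
termwise. -/
noncomputable def seqInterpolation (b r : ℕ → ℝ) (c x : ℝ) : ℝ :=
  c + ∑' n, (r n - r (n + 1)) * ramp (b (n + 1)) (b n) x

variable {b r : ℕ → ℝ} {c l : ℝ}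

lemma seqInterpolation_term_mem_Icc (hr : Antitone r) (n : ℕ) (x : ℝ) :
    (r n - r (n + 1)) * ramp (b (n + 1)) (b n) x ∈ Icc 0 (r n - r (n + 1)) :=
  have hn : 0 ≤ r n - r (n + 1) := sub_nonneg.2 (hr n.le_succ)
  ⟨mul_nonneg hn (ramp_nonneg _ _ x), mul_le_of_le_one_right hn (ramp_le_one _ _ x)⟩

lemma seqInterpolation_summable (hr : Antitone r) (hrc : Tendsto r atTop (nhds c)) (x : ℝ) :
    Summable fun n => (r n - r (n + 1)) * ramp (b (n + 1)) (b n) x :=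
  (hasSum_sub_succ_of_antitone hr hrc).summable.of_nonneg_of_le
    (fun n => (seqInterpolation_term_mem_Icc hr n x).1)
    (fun n => (seqInterpolation_term_mem_Icc hr n x).2)

lemma seqInterpolation_continuous (hr : Antitone r) (hrc : Tendsto r atTop (nhds c)) :
    Continuous (seqInterpolation b r c) := by
  refine continuous_const.add <| continuous_tsum
    (fun n => continuous_const.mul (continuous_ramp _ _))
    (hasSum_sub_succ_of_antitone hr hrc).summable fun n x => ?_
  obtain ⟨hnonneg, hle⟩ := seqInterpolation_term_mem_Icc (b := b) hr n x
  rwa [Real.norm_of_nonneg hnonneg]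

lemma seqInterpolation_monotone (hb : Antitone b) (hr : Antitone r)
    (hrc : Tendsto r atTop (nhds c)) : Monotone (seqInterpolation b r c) := by
  intro x y hxy
  refine add_le_add_right ((seqInterpolation_summable hr hrc x).tsum_le_tsum (fun n => ?_)
    (seqInterpolation_summable hr hrc y)) c
  exact mul_le_mul_of_nonneg_left (ramp_monotone (hb n.le_succ) hxy)
    (sub_nonneg.2 (hr n.le_succ))

lemma seqInterpolation_strictMonoOn (hb : Antitone b) (hbl : Tendsto b atTop (nhds l))
    (hr : StrictAnti r) (hrc : Tendsto r atTop (nhds c)) :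
    StrictMonoOn (seqInterpolation b r c) (Icc l (b 0)) := by
  intro x hx y hy hxy
  obtain ⟨n, hn⟩ := exists_mem_Ioc_succ_of_tendsto hbl (hx.1.trans_lt hxy) hy.2
  refine add_lt_add_right ((seqInterpolation_summable hr.antitone hrc x).tsum_lt_tsum (i := n)
    (fun k => ?_) ?_ (seqInterpolation_summable hr.antitone hrc y)) c
  · exact mul_le_mul_of_nonneg_left (ramp_monotone (hb k.le_succ) hxy.le)
      (sub_nonneg.2 (hr.antitone k.le_succ))
  · exact mul_lt_mul_of_pos_left (ramp_lt_ramp hxy hn) (sub_pos.2 (hr n.lt_succ_self))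

lemma seqInterpolation_apply (hb : StrictAnti b) (hr : Antitone r)
    (hrc : Tendsto r atTop (nhds c)) (m : ℕ) : seqInterpolation b r c (b m) = r m := by
  set term : ℕ → ℝ := fun n => (r n - r (n + 1)) * ramp (b (n + 1)) (b n) (b m)
  have hhead : ∑ n ∈ Finset.range m, term n = 0 := by
    refine Finset.sum_eq_zero fun n hn => ?_
    have hnm : n + 1 ≤ m := Finset.mem_range.1 hn
    simp only [term, ramp_of_le_left (hb.antitone n.le_succ) (hb.antitone hnm), mul_zero]
  have htail (n : ℕ) : term (n + m) = r (n + m) - r (n + 1 + m) := by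
    have hramp : ramp (b (n + m + 1)) (b (n + m)) (b m) = 1 :=
      ramp_of_right_le (hb (n + m).lt_succ_self) (hb.antitone (Nat.le_add_left m n))
    simp only [term, hramp, mul_one, add_right_comm n 1 m]
  have hsum : HasSum (fun n => term (n + m)) (r m - c) := by
    simpa only [htail, zero_add] using hasSum_sub_succ_of_antitone (r := fun n => r (n + m))
      (fun i j hij => hr (by lia)) ((tendsto_add_atTop_iff_nat m).2 hrc)
  have htsum : ∑' n, term n = r m - c := by
    simpa only [hhead, add_zero] using ((hasSum_nat_add_iff m).1 hsum).tsum_eq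
  rw [seqInterpolation, htsum, add_sub_cancel]

lemma seqInterpolation_apply_limit (hb : StrictAnti b) (hbl : Tendsto b atTop (nhds l))
    (hr : Antitone r) (hrc : Tendsto r atTop (nhds c)) : seqInterpolation b r c l = c := by
  have hlim := ((seqInterpolation_continuous (b := b) hr hrc).tendsto l).comp hbl
  exact tendsto_nhds_unique (hlim.congr (seqInterpolation_apply hb hr hrc)) hrc

end SeqInterpolation

theorem exists_ordContinuous_real_interpolating {D : Type*} [LinearOrder D] [Countable D]
    {a : ℕ → D} {x : D} {r : ℕ → ℝ} {c : ℝ} (ha : StrictAnti a) (hax : IsGLB (range a) x)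
    (hr : StrictAnti r) (hrc : Tendsto r atTop (nhds c)) :
    ∃ f : D → ℝ, LeftOrdContinuous f ∧ RightOrdContinuous f ∧
      StrictMonoOn f (Icc x (a 0)) ∧ (∀ n, f (a n) = r n) ∧ f x = c := by
  obtain ⟨f, hf, hleft, hright⟩ := exists_strictMono_ordContinuous_real (D := D)
  have hb : StrictAnti (f ∘ a) := hf.comp_strictAnti ha
  have hbl : Tendsto (f ∘ a) atTop (nhds (f x)) :=
    tendsto_atTop_isGLB hb.antitone (range_comp f a ▸ hright (range_nonempty a) hax)
  have hcont := seqInterpolation_continuous (b := f ∘ a) hr.antitone hrc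
  have hmono := seqInterpolation_monotone hb.antitone hr.antitone hrc
  refine ⟨seqInterpolation (f ∘ a) r c ∘ f, (hcont.leftOrdContinuous hmono).comp hleft,
    (hcont.rightOrdContinuous hmono).comp hright, ?_,
    seqInterpolation_apply hb hr.antitone hrc, seqInterpolation_apply_limit hb hbl hr.antitone hrc⟩
  exact (seqInterpolation_strictMonoOn hb.antitone hbl hr hrc).comp (hf.strictMonoOn _)
    fun d hd => ⟨hf.monotone hd.1, hf.monotone hd.2⟩

/-- Embedding of a countable linear order with endpoints, carrying a strictly
decreasing sequence with infimum `⊥` to a prescribed strictly decreasing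
sequence of reals tending to `0`, into `[0,1]`, preserving all existing
suprema and infima. -/
theorem embed_countable_order_seq {D : Type*} [LinearOrder D] [Countable D]
    [OrderBot D] [OrderTop D] (hD : (⊥ : D) ≠ ⊤)
    (a : ℕ → D) (r : ℕ → ℝ)
    (ha : StrictAnti a) (ha0 : a 0 < ⊤) (haglb : IsGLB (Set.range a) (⊥ : D))
    (hr : StrictAnti r) (hr0 : ∀ n, 0 < r n) (hr1 : ∀ n, r n < 1)
    (hrlim : Tendsto r atTop (nhds 0)) :
    ∃ g : D → unitInterval, StrictMono g ∧ g ⊥ = 0 ∧ g ⊤ = 1 ∧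
      (∀ n, (g (a n) : ℝ) = r n) ∧
      (∀ (S : Set D) (s : D), IsLUB S s → IsLUB (g '' S) (g s)) ∧
      (∀ (S : Set D) (s : D), IsGLB S s → IsGLB (g '' S) (g s)) := by
  let a' : ℕ → D := fun n => Nat.casesOn n ⊤ a
  let r' : ℕ → ℝ := fun n => Nat.casesOn n 1 r
  have ha'glb : IsGLB (range a') ⊥ :=
    ⟨fun _ _ => bot_le, fun _ hlb => haglb.2 <| forall_mem_range.2 fun n => hlb ⟨n + 1, rfl⟩⟩
  have hr'lim : Tendsto r' atTop (nhds 0) := (tendsto_add_atTop_iff_nat 1).1 hrlim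
  obtain ⟨f, hleft, hright, hmono, hfa, hfbot⟩ := exists_ordContinuous_real_interpolating
    (strictAnti_natCases ha0 ha) ha'glb (strictAnti_natCases (hr1 0) hr) hr'lim
  obtain ⟨g, hgf, hlub, hglb⟩ := exists_unitInterval_lift hleft hright hfbot (hfa 0)
  refine ⟨g, fun x y hxy => ?_, Subtype.ext ((hgf ⊥).trans hfbot),
    Subtype.ext ((hgf ⊤).trans (hfa 0)), fun n => (hgf _).trans (hfa (n + 1)), hlub, hglb⟩
  rw [← Subtype.coe_lt_coe, hgf, hgf]
  exact hmono ⟨bot_le, le_top⟩ ⟨bot_le, le_top⟩ hxy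
end

section
/- The Gödel implication is 1-Lipschitz with respect to d_max: for all x₁, y₁, x₂, y₂ ∈ [0,1], d_max(x₁ ⊸ y₁, x₂ ⊸ y₂) ≤ max(d_max(x₁, x₂), d_max(y₁, y₂)). -/
open Set

/-- `d_max(x,y) = 0` if `x = y`, and `max x y` otherwise. -/
noncomputable def dmax (x y : ℝ) : ℝ := if x = y then 0 else max x y

/-- Gödel implication in the reversed semantics: `x ⊸ y = 0` if `x ≥ y`, else `y`. -/
noncomputable def gimp (x y : ℝ) : ℝ := if y ≤ x then 0 else y

/-!
For `0 ≤ r`, the relation `dmax x y ≤ r` says that `x = y` or both are at most `r`. It suffices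
that `gimp` respects this relation for every such `r`. If both conclusions are at most `r`, so are
both implications. Otherwise the conclusions are a common value `y > r`, and then either the
premises agree, or both are at most `r < y` and both implications equal `y`.
-/

theorem dmax_self (x : ℝ) : dmax x x = 0 :=
  if_pos rfl

theorem dmax_nonneg_of_left_nonneg {x : ℝ} (hx : 0 ≤ x) (y : ℝ) : 0 ≤ dmax x y := by
  unfold dmax
  split_ifs
  · exact le_rfl
  · exact le_max_of_le_left hx

theorem dmax_le_iff {x y r : ℝ} (hr : 0 ≤ r) : dmax x y ≤ r ↔ x = y ∨ x ≤ r ∧ y ≤ r := by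
  by_cases hxy : x = y
  · simp [hxy, dmax_self, hr]
  · simp [dmax, hxy]

theorem gimp_of_lt {x y : ℝ} (h : x < y) : gimp x y = y :=
  if_neg h.not_ge

theorem gimp_le {y r : ℝ} (x : ℝ) (hr : 0 ≤ r) (hy : y ≤ r) : gimp x y ≤ r := by
  unfold gimp
  split_ifs
  · exact hr
  · exact hy

theorem dmax_gimp_le {x₁ y₁ x₂ y₂ r : ℝ} (hr : 0 ≤ r) (hx : dmax x₁ x₂ ≤ r)
    (hy : dmax y₁ y₂ ≤ r) : dmax (gimp x₁ y₁) (gimp x₂ y₂) ≤ r := by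
  rw [dmax_le_iff hr] at hx hy ⊢
  rcases hy with rfl | ⟨hy₁, hy₂⟩
  · rcases hx with rfl | ⟨hx₁, hx₂⟩
    · exact .inl rfl
    · rcases le_or_gt y₁ r with hyr | hry
      · exact .inr ⟨gimp_le x₁ hr hyr, gimp_le x₂ hr hyr⟩
      · left
        rw [gimp_of_lt (hx₁.trans_lt hry), gimp_of_lt (hx₂.trans_lt hry)]
  · exact .inr ⟨gimp_le x₁ hr hy₁, gimp_le x₂ hr hy₂⟩

theorem gimp_lipschitz_general {x₁ : ℝ} (hx₁ : 0 ≤ x₁) (y₁ x₂ y₂ : ℝ) :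
    dmax (gimp x₁ y₁) (gimp x₂ y₂) ≤ max (dmax x₁ x₂) (dmax y₁ y₂) :=
  dmax_gimp_le (le_max_of_le_left (dmax_nonneg_of_left_nonneg hx₁ x₂))
    (le_max_left _ _) (le_max_right _ _)

/-- The Gödel implication is 1-Lipschitz with respect to `d_max`. -/
theorem gimp_lipschitz :
    ∀ x₁ ∈ Icc (0:ℝ) 1, ∀ y₁ ∈ Icc (0:ℝ) 1, ∀ x₂ ∈ Icc (0:ℝ) 1, ∀ y₂ ∈ Icc (0:ℝ) 1,
      dmax (gimp x₁ y₁) (gimp x₂ y₂) ≤ max (dmax x₁ x₂) (dmax y₁ y₂) :=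
  fun _ hx₁ y₁ _ x₂ _ y₂ _ ↦ gimp_lipschitz_general hx₁.1 y₁ x₂ y₂
end

section
/- The lattice operations max and min on [0,1] are 1-Lipschitz with respect to d_max: for all x₁, y₁, x₂, y₂ ∈ [0,1], d_max(max(x₁,y₁), max(x₂,y₂)) ≤ max(d_max(x₁,x₂), d_max(y₁,y₂)) and d_max(min(x₁,y₁), min(x₂,y₂)) ≤ max(d_max(x₁,x₂), d_max(y₁,y₂)). -/
open Set

/-!
For `0 ≤ r`, the ball relation `dmax x y ≤ r` is the kernel of the truncation `x ↦ max x r`. By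
distributivity this truncation preserves `max` and `min`, so its kernel is a lattice congruence.
Taking `r` to be the larger of the two distances gives both Lipschitz bounds.
-/

theorem max_right_eq_max_right_iff {α : Type*} [LinearOrder α] {a b c : α} :
    max a c = max b c ↔ a = b ∨ max a b ≤ c := by
  rw [sup_eq_sup_iff_right, le_max_iff, le_max_iff, max_le_iff, le_antisymm_iff]
  grind

section

variable {r x y x₁ x₂ y₁ y₂ : ℝ}

theorem dmax_nonneg (hxy : 0 ≤ max x y) : 0 ≤ dmax x y := by
  unfold dmax
  split_ifs
  exacts [le_rfl, hxy]

theorem dmax_le_iff_max_eq_max (hr : 0 ≤ r) : dmax x y ≤ r ↔ max x r = max y r := by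
  rw [max_right_eq_max_right_iff, dmax]
  split_ifs with hxy <;> simp [hxy, hr]

theorem dmax_max_max_le (hr : 0 ≤ r) (hx : dmax x₁ x₂ ≤ r) (hy : dmax y₁ y₂ ≤ r) :
    dmax (max x₁ y₁) (max x₂ y₂) ≤ r := by
  rw [dmax_le_iff_max_eq_max hr] at hx hy ⊢
  calc max (max x₁ y₁) r = max (max x₁ r) (max y₁ r) := sup_sup_distrib_right ..
    _ = max (max x₂ r) (max y₂ r) := by rw [hx, hy]
    _ = max (max x₂ y₂) r := (sup_sup_distrib_right ..).symm

theorem dmax_min_min_le (hr : 0 ≤ r) (hx : dmax x₁ x₂ ≤ r) (hy : dmax y₁ y₂ ≤ r) :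
    dmax (min x₁ y₁) (min x₂ y₂) ≤ r := by
  rw [dmax_le_iff_max_eq_max hr] at hx hy ⊢
  calc max (min x₁ y₁) r = min (max x₁ r) (max y₁ r) := max_min_distrib_right ..
    _ = min (max x₂ r) (max y₂ r) := by rw [hx, hy]
    _ = max (min x₂ y₂) r := (max_min_distrib_right ..).symm

end

theorem max_min_lipschitz_general {x₁ : ℝ} (hx₁ : 0 ≤ x₁) (y₁ x₂ y₂ : ℝ) :
    dmax (max x₁ y₁) (max x₂ y₂) ≤ max (dmax x₁ x₂) (dmax y₁ y₂) ∧
    dmax (min x₁ y₁) (min x₂ y₂) ≤ max (dmax x₁ x₂) (dmax y₁ y₂) := by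
  have hr : 0 ≤ max (dmax x₁ x₂) (dmax y₁ y₂) :=
    le_max_of_le_left (dmax_nonneg (le_max_of_le_left hx₁))
  exact ⟨dmax_max_max_le hr (le_max_left ..) (le_max_right ..),
    dmax_min_min_le hr (le_max_left ..) (le_max_right ..)⟩

/-- `max` and `min` on `[0,1]` are 1-Lipschitz with respect to `d_max`. -/
theorem max_min_lipschitz :
    ∀ x₁ ∈ Icc (0:ℝ) 1, ∀ y₁ ∈ Icc (0:ℝ) 1, ∀ x₂ ∈ Icc (0:ℝ) 1, ∀ y₂ ∈ Icc (0:ℝ) 1,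
      dmax (max x₁ y₁) (max x₂ y₂) ≤ max (dmax x₁ x₂) (dmax y₁ y₂) ∧
      dmax (min x₁ y₁) (min x₂ y₂) ≤ max (dmax x₁ x₂) (dmax y₁ y₂) :=
  fun _ hx₁ y₁ _ x₂ _ y₂ _ ↦ max_min_lipschitz_general hx₁.1 y₁ x₂ y₂
end
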